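/- Let d be a positive integer, let m_1,…,m_d be non-negative integers and u_1,…,u_d be non-negative integers with u_d ≥ 1, and set s := ⊔_{i=1}^{d}(m_i+2, {1}_{u_i}), a tuple of length ‖s‖ with weight |s|. Let a, p ∈ ℝ with p ≠ 1 and |a| ≤ min(1, 2/p − 1). Then Li*_s({1}_{‖s‖−1}, a) = Li*_{{1}_{|s|}}( ⊔_{i=1}^{d}{1−p, {1}_{m_i}, 1/(1−p), {1}_{u_i−δ_{i,d}}}, 1−p+ap ) − Li*_{{1}_{|s|}}( ⊔_{i=1}^{d}{1−p, {1}_{m_i}, 1/(1−p), {1}_{u_i−δ_{i,d}}}, 1−p ), where δ_{i,j} is the Kronecker delta (so only the last group of ones is shortened by one). -/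

import Mathlib

/-- One-dimensional polylogarithm `Li_s(x) = ∑_{n≥1} x^n/n^s`. -/
noncomputable def Li (s : ℕ) (x : ℝ) : ℝ := ∑' n : ℕ, x ^ (n + 1) / (n + 1 : ℝ) ^ s

/-- Multiple polylogarithm
`Li*_{s₁,…,s_d}(x₁,…,x_d) = ∑_{n₁ ≥ ⋯ ≥ n_d ≥ 1} ∏ᵢ xᵢ^{nᵢ}/nᵢ^{sᵢ}`. -/
noncomputable def LiStar (s : List ℕ) (x : List ℝ) : ℝ :=
  ∑' m : {m : Fin s.length → ℕ // (∀ i j : Fin s.length, i ≤ j → m j ≤ m i) ∧ ∀ i, 1 ≤ m i},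
    ∏ i : Fin s.length, x.getD (i : ℕ) 0 ^ m.1 i / (m.1 i : ℝ) ^ s.get i

/-- The exponent tuple `s = ⊔_{i=1}^{d+1} (mᵢ+2, {1}_{uᵢ})`
(here `d+1` plays the role of the paper's `d ≥ 1`). -/
def sTup2 (d : ℕ) (m u : Fin (d + 1) → ℕ) : List ℕ :=
  (List.ofFn fun i : Fin (d + 1) => (m i + 2) :: List.replicate (u i) 1).flatten

/-- The argument prefix `⊔_{i=1}^{d+1}{1−p, {1}_{mᵢ}, 1/(1−p), {1}_{uᵢ−δ_{i,d+1}}}`,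
where only the last group of ones is shortened by one. -/
noncomputable def xPre2 (d : ℕ) (m u : Fin (d + 1) → ℕ) (p : ℝ) : List ℝ :=
  (List.ofFn fun i : Fin (d + 1) =>
    (1 - p) :: (List.replicate (m i) (1 : ℝ) ++
      (1 / (1 - p)) ::
        List.replicate (u i - if i = Fin.last d then 1 else 0) (1 : ℝ))).flatten

open Finset Filter Topology

/-- Iterated truncated sums. -/
noncomputable def opT : List (ℕ × ℝ) → (ℕ → ℝ) → ℕ → ℝ
  | [], f => f
  | (c :: l), f => fun N => ∑ n ∈ Finset.Icc 1 N, c.2 ^ n / (n : ℝ) ^ c.1 * opT l f n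

/-- The same through separate lists. -/
noncomputable def TT : List ℕ → List ℝ → ℕ → ℝ
  | [], _ => fun _ => 1
  | (s :: ss), x => fun N =>
      ∑ n ∈ Finset.Icc 1 N, x.getD 0 0 ^ n / (n : ℝ) ^ s * TT ss x.tail n

lemma TT_eq (L : List (ℕ × ℝ)) :
    TT (L.map Prod.fst) (L.map Prod.snd) = opT L (fun _ => 1) := by
  induction L with
  | nil => rfl
  | cons c l ih =>
    funext N
    simp only [List.map_cons, TT, opT, List.tail_cons, ih, List.getD_cons_zero]

/-- Antitone tuples with values in `[1,N]`. -/
noncomputable def AA (n N : ℕ) : Finset (Fin n → ℕ) :=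
  (Fintype.piFinset (fun _ => Finset.Icc 1 N)).filter (fun m => ∀ i j, i ≤ j → m j ≤ m i)

lemma mem_AA {n N : ℕ} {m : Fin n → ℕ} :
    m ∈ AA n N ↔ (∀ i, 1 ≤ m i ∧ m i ≤ N) ∧ ∀ i j, i ≤ j → m j ≤ m i := by
  simp [AA]

lemma AA_succ (n N : ℕ) (g : Fin (n + 1) → ℕ → ℝ) :
    ∑ m ∈ AA (n + 1) N, ∏ i, g i (m i) =
      ∑ k ∈ Finset.Icc 1 N, g 0 k * ∑ m ∈ AA n k, ∏ i, g i.succ (m i) := by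
  simp_rw [Finset.mul_sum]
  rw [Finset.sum_sigma']
  refine Finset.sum_bij' (fun m _ => (⟨m 0, fun i => m i.succ⟩ : Σ _ : ℕ, Fin n → ℕ))
    (fun x _ => Fin.cons x.1 x.2) ?_ ?_ ?_ ?_ ?_
  · intro m hm
    rw [mem_AA] at hm
    simp only [Finset.mem_sigma, Finset.mem_Icc, mem_AA]
    refine ⟨hm.1 0, fun i => ⟨(hm.1 _).1, hm.2 _ _ (Fin.zero_le _)⟩, fun i j hij =>
      hm.2 _ _ (Fin.succ_le_succ_iff.2 hij)⟩
  · rintro ⟨k, m⟩ hm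
    simp only [Finset.mem_sigma, Finset.mem_Icc, mem_AA] at hm
    rw [mem_AA]
    constructor
    · intro i
      refine Fin.cases ?_ (fun i => ?_) i
      · simpa using hm.1
      · simp only [Fin.cons_succ]
        exact ⟨(hm.2.1 i).1, (hm.2.1 i).2.trans hm.1.2⟩
    · intro i j
      refine Fin.cases ?_ (fun i => ?_) i
      · refine Fin.cases ?_ (fun j => ?_) j
        · simp
        · intro _
          simpa using (hm.2.1 j).2
      · refine Fin.cases ?_ (fun j => ?_) j
        · intro h
          exact absurd h (by simp)
        · intro h
          simpa using hm.2.2 i j (Fin.succ_le_succ_iff.1 h)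
  · intro m _
    funext i
    refine Fin.cases ?_ (fun i => ?_) i <;> simp
  · rintro ⟨k, m⟩ _
    simp
  · intro m _
    simp [Fin.prod_univ_succ]

lemma sum_AA (s : List ℕ) : ∀ (x : List ℝ) (N : ℕ),
    ∑ m ∈ AA s.length N, ∏ i : Fin s.length, x.getD (i : ℕ) 0 ^ m i / (m i : ℝ) ^ s.get i
      = TT s x N := by
  induction s with
  | nil =>
    intro x N
    have : AA ([] : List ℕ).length N = {Fin.elim0} := by
      ext m
      simp only [mem_AA, Finset.mem_singleton]
      constructor
      · intro _
        funext i
        exact i.elim0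
      · intro _
        exact ⟨fun i => i.elim0, fun i => i.elim0⟩
    rw [this]
    simp [TT]
  | cons s ss ih =>
    intro x N
    have := AA_succ ss.length N
      (fun i k => x.getD (i : ℕ) 0 ^ k / (k : ℝ) ^ (s :: ss).get i)
    refine this.trans ?_
    simp only [TT]
    refine Finset.sum_congr rfl fun k _ => ?_
    rw [← ih x.tail k]
    have h0 : ∀ i : ℕ, x.tail.getD i 0 = x.getD (i + 1) 0 := by
      intro i
      cases x <;> simp
    simp only [h0]
    rfl

lemma LiStar_tendsto' (s : List ℕ) (x : List ℝ) (C : ℝ)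
    (hb : ∀ N, TT s (x.map (fun y => |y|)) N ≤ C) :
    Tendsto (TT s x) atTop (𝓝 (LiStar s x)) := by
  classical
  let X := {m : Fin s.length → ℕ // (∀ i j : Fin s.length, i ≤ j → m j ≤ m i) ∧ ∀ i, 1 ≤ m i}
  let F : (Fin s.length → ℕ) → ℝ :=
    fun m => ∏ i : Fin s.length, x.getD (i : ℕ) 0 ^ m i / (m i : ℝ) ^ s.get i
  let A : ℕ → Finset X := fun N => (AA s.length N).subtype _
  have hA : ∀ (G : (Fin s.length → ℕ) → ℝ) N, ∑ m ∈ A N, G m.1 = ∑ m ∈ AA s.length N, G m := by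
    intro G N
    exact Finset.sum_subtype_of_mem (p := fun m : Fin s.length → ℕ =>
      (∀ i j : Fin s.length, i ≤ j → m j ≤ m i) ∧ ∀ i, 1 ≤ m i) G (fun m hm => by
        rw [mem_AA] at hm
        exact ⟨hm.2, fun i => (hm.1 i).1⟩)
  have hmem : ∀ (m : X) N, m ∈ A N ↔ ∀ i, m.1 i ≤ N := by
    intro m N
    refine Finset.mem_subtype.trans ?_
    rw [mem_AA]
    exact ⟨fun h i => (h.1 i).2, fun h => ⟨fun i => ⟨m.2.2 i, h i⟩, m.2.1⟩⟩
  have hAt : Tendsto A atTop atTop := by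
    apply tendsto_atTop_finset_of_monotone
    · intro N M h m hm
      rw [hmem] at hm ⊢
      exact fun i => (hm i).trans h
    · intro m
      refine ⟨∑ i, m.1 i, (hmem _ _).2 fun i => ?_⟩
      exact Finset.single_le_sum (f := m.1) (fun _ _ => Nat.zero_le _) (Finset.mem_univ i)
  have habs : ∀ m, |F m| = ∏ i : Fin s.length,
      (x.map (fun y => |y|)).getD (i : ℕ) 0 ^ m i / (m i : ℝ) ^ s.get i := by
    intro m
    simp only [F, Finset.abs_prod]
    refine Finset.prod_congr rfl fun i _ => ?_
    rw [abs_div, abs_pow, abs_pow, Nat.abs_cast]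
    congr 2
    have := List.getD_map (l := x) (d := (0:ℝ)) (n := (i:ℕ)) (fun y : ℝ => |y|)
    simpa using this.symm
  have hsum : Summable (fun m : X => F m.1) := by
    apply Summable.of_abs
    refine summable_of_sum_le (c := C) (fun _ => abs_nonneg _) ?_
    intro u
    obtain ⟨N, hN⟩ := (hAt.eventually (eventually_ge_atTop u)).exists
    calc ∑ m ∈ u, |F m.1| ≤ ∑ m ∈ A N, |F m.1| :=
          Finset.sum_le_sum_of_subset_of_nonneg hN (fun _ _ _ => abs_nonneg _)
      _ = ∑ m ∈ AA s.length N, |F m| := hA (fun m => |F m|) N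
      _ = TT s (x.map (fun y => |y|)) N := by
          rw [← sum_AA]
          exact Finset.sum_congr rfl fun m _ => habs m
      _ ≤ C := hb N
  have h := hsum.hasSum.comp hAt
  refine h.congr fun N => ?_
  simp only [Function.comp]
  rw [hA F N]
  exact sum_AA s x N

lemma LiStar_tendsto (L : List (ℕ × ℝ)) (C : ℝ)
    (hb : ∀ N, opT (L.map (fun c => (c.1, |c.2|))) (fun _ => 1) N ≤ C) :
    Tendsto (opT L (fun _ => 1)) atTop (𝓝 (LiStar (L.map Prod.fst) (L.map Prod.snd))) := by
  rw [← TT_eq]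
  refine LiStar_tendsto' _ _ C ?_
  intro N
  refine le_trans (le_of_eq ?_) (hb N)
  rw [← TT_eq]
  simp [List.map_map, Function.comp_def]

lemma opT_append (l l' : List (ℕ × ℝ)) (f : ℕ → ℝ) :
    opT (l ++ l') f = opT l (opT l' f) := by
  induction l with
  | nil => rfl
  | cons c l ih => simp [opT, ih]

lemma opT_sub (l : List (ℕ × ℝ)) (f g : ℕ → ℝ) (N : ℕ) :
    opT l (fun n => f n - g n) N = opT l f N - opT l g N := by
  induction l generalizing N with
  | nil => rfl
  | cons c l ih => simp [opT, ih, mul_sub]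

lemma opT_zero (l : List (ℕ × ℝ)) (N : ℕ) :
    opT l (fun _ => 0) N = 0 := by
  induction l generalizing N with
  | nil => rfl
  | cons c l ih => simp [opT, ih]

lemma opT_at_zero (l : List (ℕ × ℝ)) (f : ℕ → ℝ) (hf : f 0 = 0) :
    opT l f 0 = 0 := by
  cases l <;> simp [opT, hf]

/-- The binomial transform. -/
noncomputable def BB (q p : ℝ) (f : ℕ → ℝ) (n : ℕ) : ℝ :=
  ∑ k ∈ Finset.range (n + 1), (n.choose k : ℝ) * q ^ (n - k) * p ^ k * f k

/-- The linear functional `X^k ↦ f k`. -/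
noncomputable def phi (f : ℕ → ℝ) : Polynomial ℝ →ₗ[ℝ] ℝ :=
  (Polynomial.basisMonomials ℝ).constr ℝ f

lemma phi_X (f : ℕ → ℝ) (k : ℕ) : phi f (Polynomial.X ^ k) = f k := by
  have := (Polynomial.basisMonomials ℝ).constr_basis ℝ f k
  simpa [phi, Polynomial.coe_basisMonomials, Polynomial.X_pow_eq_monomial] using this

lemma phi_C (f : ℕ → ℝ) (c : ℝ) (P : Polynomial ℝ) :
    phi f (Polynomial.C c * P) = c * phi f P := by
  rw [← Polynomial.smul_eq_C_mul, map_smul, smul_eq_mul]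

open Polynomial in
lemma BB_phi' (f : ℕ → ℝ) (q p : ℝ) (n : ℕ) (P : Polynomial ℝ) :
    phi f ((C q + C p * P) ^ n) =
      ∑ k ∈ Finset.range (n + 1), (n.choose k : ℝ) * q ^ (n - k) * p ^ k * phi f (P ^ k) := by
  rw [add_comm, add_pow, map_sum]
  refine Finset.sum_congr rfl fun k _ => ?_
  rw [← phi_C]
  congr 1
  simp only [map_mul, map_pow, mul_pow, map_natCast]
  ring

open Polynomial in
lemma BB_phi (f : ℕ → ℝ) (q p : ℝ) (n : ℕ) :
    BB q p f n = phi f ((C q + C p * X) ^ n) := by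
  rw [BB_phi']
  simp only [phi_X, BB]

open Polynomial in
lemma BB_inv (f : ℕ → ℝ) (q p : ℝ) (hp : p ≠ 0) (n : ℕ) :
    BB (-q / p) (1 / p) (BB q p f) n = f n := by
  have h1 : BB (-q / p) (1 / p) (BB q p f) n =
      phi f ((C (-q / p) + C (1 / p) * (C q + C p * X)) ^ n) := by
    rw [BB_phi']
    simp only [← BB_phi]
    rfl
  rw [h1]
  have : (C (-q / p) + C (1 / p) * (C q + C p * X) : Polynomial ℝ) = X := by
    rw [mul_add, ← mul_assoc, ← C_mul, ← C_mul, ← add_assoc, ← C_add]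
    have e1 : -q / p + 1 / p * q = 0 := by ring
    have e2 : 1 / p * p = 1 := by field_simp
    rw [e1, e2]
    simp
  rw [this, phi_X]

/-- key identity -/
lemma BB_key (f : ℕ → ℝ) (hf : f 0 = 0) (q p : ℝ) (n : ℕ) :
    BB q p f (n + 1) / ((n : ℝ) + 1) = p * BB q p (fun k => f (k + 1) / ((k : ℝ) + 1)) n := by
  unfold BB
  rw [Finset.sum_range_succ', hf, Finset.mul_sum, mul_zero, add_zero, Finset.sum_div]
  refine Finset.sum_congr rfl fun k _ => ?_
  have h : ((n : ℝ) + 1) * (n.choose k : ℝ) = ((n + 1).choose (k + 1) : ℝ) * ((k : ℝ) + 1) := by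
    exact_mod_cast Nat.add_one_mul_choose_eq n k
  have hn : ((n : ℝ) + 1) ≠ 0 := by positivity
  have hk : ((k : ℝ) + 1) ≠ 0 := by positivity
  have e : n + 1 - (k + 1) = n - k := by omega
  rw [e]
  field_simp
  linear_combination (-q ^ (n - k) * p ^ (k + 1) * f (k + 1)) * h

open Polynomial in
lemma BB_diff (f : ℕ → ℝ) (q p : ℝ) (hpq : p + q = 1) (n : ℕ) :
    BB q p f (n + 1) - BB q p f n = p * BB q p (fun k => f (k + 1) - f k) n := by
  have hl : ∀ P : Polynomial ℝ, phi (fun k => f (k + 1) - f k) P = phi f ((X - 1) * P) := by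
    intro P
    induction P using Polynomial.induction_on' with
    | add P Q hP hQ => rw [map_add, hP, hQ, mul_add, map_add]
    | monomial k c =>
      rw [← C_mul_X_pow_eq_monomial, phi_C, phi_X,
        show ((X - 1) * (C c * X ^ k) : Polynomial ℝ) = C c * (X ^ (k + 1) - X ^ k) by ring,
        phi_C, map_sub, phi_X, phi_X]
  rw [BB_phi, BB_phi, BB_phi, hl, ← phi_C, ← map_sub]
  congr 1
  have hq : q = 1 - p := by linarith
  rw [hq, C_sub, C_1]
  ring

open Polynomial in
lemma BB_diff1 (f : ℕ → ℝ) (c : ℝ) (n : ℕ) :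
    BB 1 c f (n + 1) - BB 1 c f n = c * BB 1 c (fun k => f (k + 1)) n := by
  have hl : ∀ P : Polynomial ℝ, phi (fun k => f (k + 1)) P = phi f (X * P) := by
    intro P
    induction P using Polynomial.induction_on' with
    | add P Q hP hQ => rw [map_add, hP, hQ, mul_add, map_add]
    | monomial k c =>
      rw [← C_mul_X_pow_eq_monomial, phi_C, phi_X,
        show (X * (C c * X ^ k) : Polynomial ℝ) = C c * (X ^ (k + 1)) by ring,
        phi_C, phi_X]
  rw [BB_phi, BB_phi, BB_phi, hl, ← phi_C, ← map_sub]
  congr 1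
  rw [C_1]
  ring

/-- summation operator -/
noncomputable def SS (f : ℕ → ℝ) (N : ℕ) : ℝ := ∑ n ∈ Finset.Icc 1 N, f n / (n : ℝ)

lemma SS_succ (f : ℕ → ℝ) (n : ℕ) : SS f (n + 1) = SS f n + f (n + 1) / ((n : ℝ) + 1) := by
  unfold SS
  rw [Finset.sum_Icc_succ_top (by omega)]
  push_cast
  rfl

lemma SS_zero (f : ℕ → ℝ) : SS f 0 = 0 := by simp [SS]

lemma BB_zero (f : ℕ → ℝ) (q p : ℝ) : BB q p f 0 = f 0 := by simp [BB]

lemma BB_SS (f : ℕ → ℝ) (hf : f 0 = 0) (q p : ℝ) (hpq : p + q = 1) :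
    SS (BB q p f) = BB q p (SS f) := by
  funext n
  induction n with
  | zero => rw [SS_zero, BB_zero, SS_zero]
  | succ n ih =>
    rw [SS_succ, ih, BB_key f hf]
    have := BB_diff (SS f) q p hpq n
    have e : (fun k => SS f (k + 1) - SS f k) = fun k => f (k + 1) / ((k : ℝ) + 1) := by
      funext k
      rw [SS_succ]
      ring
    rw [e] at this
    linarith

lemma BB1_SS (f : ℕ → ℝ) (hf : f 0 = 0) (c : ℝ) :
    SS (BB 1 c f) = BB 1 c (fun k => f k / (k : ℝ)) := by
  funext n
  induction n with
  | zero => rw [SS_zero, BB_zero]; simp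
  | succ n ih =>
    rw [SS_succ, ih, BB_key f hf]
    have := BB_diff1 (fun k => f k / (k : ℝ)) c n
    push_cast at this
    linarith

lemma BB_scale (f : ℕ → ℝ) (q p : ℝ) (hq : q ≠ 0) (n : ℕ) :
    BB q p f n = q ^ n * BB 1 (p / q) f n := by
  unfold BB
  rw [Finset.mul_sum]
  refine Finset.sum_congr rfl fun k hk => ?_
  have : n = (n - k) + k := by
    have := Finset.mem_range.1 hk
    omega
  have e : q ^ n = q ^ (n - k) * q ^ k := by rw [← pow_add, ← this]
  rw [e, div_pow, one_pow]
  field_simp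

lemma opT_one (f : ℕ → ℝ) (l : List (ℕ × ℝ)) : opT ((1, 1) :: l) f = SS (opT l f) := by
  funext N
  simp only [opT, SS]
  refine Finset.sum_congr rfl fun k _ => ?_
  simp
  ring

lemma opT_x (x : ℝ) (f : ℕ → ℝ) (l : List (ℕ × ℝ)) :
    opT ((1, x) :: l) f = SS (fun n => x ^ n * opT l f n) := by
  funext N
  simp only [opT, SS]
  refine Finset.sum_congr rfl fun k _ => ?_
  simp
  ring

/-- blocks -/
def Lb (l : List (ℕ × ℕ)) : List (ℕ × ℝ) :=
  l.flatMap fun c => (c.1 + 2, (1 : ℝ)) :: List.replicate c.2 (1, (1 : ℝ))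

/-- blocks, second kind -/
noncomputable def Rb (q : ℝ) (l : List (ℕ × ℕ)) : List (ℕ × ℝ) :=
  l.flatMap fun c => (1, q) :: (List.replicate c.1 (1, (1 : ℝ)) ++
    (1, 1 / q) :: List.replicate c.2 (1, (1 : ℝ)))

lemma rep_B (f : ℕ → ℝ) (hf : f 0 = 0) (q p : ℝ) (hpq : p + q = 1) (u : ℕ) :
    opT (List.replicate u (1, (1 : ℝ))) (BB q p f) =
      BB q p (opT (List.replicate u (1, (1 : ℝ))) f) := by
  induction u with
  | zero => rfl
  | succ u ih =>
    rw [List.replicate_succ, opT_one, opT_one, ih, BB_SS _ (opT_at_zero _ _ hf) _ _ hpq]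

lemma rep_B1 (f : ℕ → ℝ) (hf : f 0 = 0) (c : ℝ) (u : ℕ) :
    opT (List.replicate u (1, (1 : ℝ))) (BB 1 c f) =
      BB 1 c (fun k => f k / (k : ℝ) ^ u) := by
  induction u with
  | zero => simp [opT]
  | succ u ih =>
    rw [List.replicate_succ, opT_one, ih, BB1_SS _ (by simp [hf])]
    congr 1
    funext k
    rw [pow_succ, div_div]

lemma blocks_B (f : ℕ → ℝ) (hf : f 0 = 0) (q p : ℝ) (hq : q ≠ 0) (hpq : p + q = 1)
    (l : List (ℕ × ℕ)) :
    opT (Rb q l) (BB q p f) = BB q p (opT (Lb l) f) := by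
  induction l with
  | nil => rfl
  | cons c l ih =>
    obtain ⟨m, u⟩ := c
    have e1 : Rb q ((m, u) :: l) = (1, q) :: (List.replicate m (1, (1 : ℝ)) ++
      (1, 1 / q) :: (List.replicate u (1, (1 : ℝ)) ++ Rb q l)) := by
      simp [Rb]
    have e2 : Lb ((m, u) :: l) = (m + 2, (1 : ℝ)) ::
        (List.replicate u (1, (1 : ℝ)) ++ Lb l) := by
      simp [Lb]
    rw [e1, e2, opT_x, opT_append, opT_x, opT_append, ih]
    have h0 : opT (Lb l) f 0 = 0 := opT_at_zero _ _ hf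
    rw [rep_B _ h0 q p hpq, ← opT_append]
    set g := opT (List.replicate u (1, (1 : ℝ)) ++ Lb l) f with hg
    have g0 : g 0 = 0 := opT_at_zero _ _ hf
    have h1 : (fun n => (1 / q) ^ n * BB q p g n) = BB 1 (p / q) g := by
      funext n
      rw [BB_scale _ _ _ hq, ← mul_assoc, ← mul_pow]
      simp [hq]
    rw [h1, BB1_SS _ g0, rep_B1 _ (by simp)]
    have h2 : (fun n => q ^ n * BB 1 (p / q) (fun k => g k / (k : ℝ) / (k : ℝ) ^ m) n) =
        BB q p (fun k => g k / (k : ℝ) / (k : ℝ) ^ m) := by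
      funext n
      rw [← BB_scale _ _ _ hq]
    rw [h2, BB_SS _ (by simp) _ _ hpq]
    congr 1
    funext N
    simp only [SS, opT]
    refine Finset.sum_congr rfl fun k _ => ?_
    rw [← hg]
    simp only [one_pow, div_eq_mul_inv, mul_inv, pow_add, pow_two]
    ring

/-- regularity of the Euler method -/
lemma BB_tendsto (f : ℕ → ℝ) (L q p : ℝ) (hq : 0 < q) (hp : 0 < p) (hpq : p + q = 1)
    (hf : Tendsto f atTop (𝓝 L)) : Tendsto (BB q p f) atTop (𝓝 L) := by
  have hone : ∀ n, ∑ k ∈ Finset.range (n + 1), (n.choose k : ℝ) * q ^ (n - k) * p ^ k = 1 := by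
    intro n
    have := add_pow p q n
    rw [hpq, one_pow] at this
    rw [this]
    refine Finset.sum_congr rfl fun k _ => by ring
  have hk : ∀ k : ℕ, Tendsto (fun n : ℕ => (n.choose k : ℝ) * q ^ (n - k) * p ^ k) atTop (𝓝 0) := by
    intro k
    have h1 : Tendsto (fun n : ℕ => (n : ℝ) ^ k * q ^ n * (p / q) ^ k) atTop (𝓝 0) := by
      have := tendsto_pow_const_mul_const_pow_of_abs_lt_one k (r := q)
        (by rw [abs_of_pos hq]; linarith)
      simpa using this.mul_const ((p / q) ^ k)
    refine squeeze_zero' (Eventually.of_forall fun n => by positivity) ?_ h1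
    filter_upwards [eventually_ge_atTop k] with n hn
    have e : q ^ n = q ^ (n - k) * q ^ k := by rw [← pow_add, Nat.sub_add_cancel hn]
    have e2 : (n : ℝ) ^ k * q ^ n * (p / q) ^ k = (n : ℝ) ^ k * q ^ (n - k) * p ^ k := by
      rw [e, div_pow]
      field_simp
    rw [e2]
    have : (n.choose k : ℝ) ≤ (n : ℝ) ^ k := by exact_mod_cast Nat.choose_le_pow n k
    gcongr
  rw [Metric.tendsto_atTop]
  intro ε hε
  obtain ⟨K, hK⟩ := (Metric.tendsto_atTop.1 hf) (ε / 2) (by positivity)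
  have hfin : Tendsto (fun n : ℕ => ∑ k ∈ Finset.range K,
      (n.choose k : ℝ) * q ^ (n - k) * p ^ k * |f k - L|) atTop (𝓝 0) := by
    have := tendsto_finsetSum (Finset.range K) (fun k _ => (hk k).mul_const |f k - L|)
    simpa using this
  obtain ⟨M, hM⟩ := (Metric.tendsto_atTop.1 hfin) (ε / 2) (by positivity)
  refine ⟨max M K, fun n hn => ?_⟩
  have hnM := hM n (le_of_max_le_left hn)
  have hnK : K ≤ n := le_of_max_le_right hn
  rw [Real.dist_eq, sub_zero] at hnM
  have hnM := lt_of_abs_lt hnM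
  have e : BB q p f n - L =
      ∑ k ∈ Finset.range (n + 1), (n.choose k : ℝ) * q ^ (n - k) * p ^ k * (f k - L) := by
    simp only [mul_sub, Finset.sum_sub_distrib, ← Finset.sum_mul, hone, one_mul]
    rfl
  rw [Real.dist_eq, e]
  calc |∑ k ∈ Finset.range (n + 1), (n.choose k : ℝ) * q ^ (n - k) * p ^ k * (f k - L)|
      ≤ ∑ k ∈ Finset.range (n + 1), (n.choose k : ℝ) * q ^ (n - k) * p ^ k * |f k - L| := by
        refine (Finset.abs_sum_le_sum_abs _ _).trans (le_of_eq ?_)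
        refine Finset.sum_congr rfl fun k _ => ?_
        rw [abs_mul, abs_of_nonneg (by positivity)]
    _ = ∑ k ∈ Finset.range K, (n.choose k : ℝ) * q ^ (n - k) * p ^ k * |f k - L| +
        ∑ k ∈ Finset.Ico K (n + 1), (n.choose k : ℝ) * q ^ (n - k) * p ^ k * |f k - L| :=
        (Finset.sum_range_add_sum_Ico _ (by omega)).symm
    _ < ε / 2 + ε / 2 := by
        refine add_lt_add_of_lt_of_le hnM ?_
        calc ∑ k ∈ Finset.Ico K (n + 1), (n.choose k : ℝ) * q ^ (n - k) * p ^ k * |f k - L|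
            ≤ ∑ k ∈ Finset.Ico K (n + 1), (n.choose k : ℝ) * q ^ (n - k) * p ^ k * (ε / 2) := by
              refine Finset.sum_le_sum fun k hk => ?_
              have := (hK k (Finset.mem_Ico.1 hk).1).le
              rw [Real.dist_eq] at this
              gcongr
          _ ≤ ∑ k ∈ Finset.range (n + 1), (n.choose k : ℝ) * q ^ (n - k) * p ^ k * (ε / 2) := by
              refine Finset.sum_le_sum_of_subset_of_nonneg ?_ (fun _ _ _ => by positivity)
              intro k hk
              exact Finset.mem_range.2 (Finset.mem_Ico.1 hk).2
          _ = ε / 2 := by rw [← Finset.sum_mul, hone, one_mul]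
    _ = ε := by ring

/-- growth at most `√n` -/
def GG (f : ℕ → ℝ) : Prop := ∃ C : ℝ, 0 ≤ C ∧ ∀ n : ℕ, 1 ≤ n → |f n| ≤ C * √(n : ℝ)

/-- bounded -/
def BD (f : ℕ → ℝ) : Prop := ∃ C : ℝ, 0 ≤ C ∧ ∀ n : ℕ, |f n| ≤ C

/-- growth at most `r^(-n)/√n` -/
def QQ (r : ℝ) (f : ℕ → ℝ) : Prop :=
  ∃ C : ℝ, 0 ≤ C ∧ ∀ n : ℕ, 1 ≤ n → |f n| ≤ C * ((1 / r) ^ n / √(n : ℝ))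

lemma BD.gg {f : ℕ → ℝ} (h : BD f) : GG f := by
  obtain ⟨C, hC, h⟩ := h
  refine ⟨C, hC, fun n hn => (h n).trans ?_⟩
  have : (1 : ℝ) ≤ √(n : ℝ) := Real.one_le_sqrt.2 (by exact_mod_cast hn)
  nlinarith

lemma sum_inv_sqrt (N : ℕ) : ∑ n ∈ Finset.Icc 1 N, 1 / √(n : ℝ) ≤ 2 * √(N : ℝ) := by
  induction N with
  | zero => simp
  | succ n ih =>
    rw [Finset.sum_Icc_succ_top (by omega)]
    have hx : 0 ≤ √(n : ℝ) := Real.sqrt_nonneg _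
    have hy : 0 < √((n + 1 : ℕ) : ℝ) := Real.sqrt_pos.2 (by positivity)
    have hxs : √(n : ℝ) ^ 2 = n := Real.sq_sqrt (by positivity)
    have hys : √((n + 1 : ℕ) : ℝ) ^ 2 = (n : ℝ) + 1 := by
      rw [Real.sq_sqrt (by positivity)]
      push_cast
      rfl
    set x := √(n : ℝ)
    set y := √((n + 1 : ℕ) : ℝ)
    have : 1 / y ≤ 2 * (y - x) := by
      rw [div_le_iff₀ hy]
      nlinarith [sq_nonneg (y - x)]
    linarith

lemma sqrt_div_self' (n : ℕ) : √(n : ℝ) / (n : ℝ) = 1 / √(n : ℝ) := by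
  rw [Real.sqrt_div_self, one_div]

lemma SS_GG {f : ℕ → ℝ} (h : GG f) : GG (SS f) := by
  obtain ⟨C, hC, h⟩ := h
  refine ⟨C * 2, by positivity, fun N hN => ?_⟩
  calc |SS f N| ≤ ∑ n ∈ Finset.Icc 1 N, |f n / (n : ℝ)| := Finset.abs_sum_le_sum_abs _ _
    _ ≤ ∑ n ∈ Finset.Icc 1 N, C * (1 / √(n : ℝ)) := by
        refine Finset.sum_le_sum fun n hn => ?_
        rw [abs_div, Nat.abs_cast, ← sqrt_div_self', ← mul_div_assoc]
        have := h n (Finset.mem_Icc.1 hn).1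
        gcongr
    _ = C * ∑ n ∈ Finset.Icc 1 N, (1 / √(n : ℝ)) := by rw [Finset.mul_sum]
    _ ≤ C * (2 * √(N : ℝ)) := by
        have := sum_inv_sqrt N
        gcongr
    _ = C * 2 * √(N : ℝ) := by ring

lemma summable_32 : Summable (fun n : ℕ => √(n : ℝ) / (n : ℝ) ^ 2) := by
  have := Real.summable_one_div_nat_rpow (p := 3 / 2) |>.2 (by norm_num)
  refine this.congr fun n => ?_
  rcases Nat.eq_zero_or_pos n with rfl | hn
  · simp
  · have hn : (0 : ℝ) < n := by exact_mod_cast hn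
    rw [Real.sqrt_eq_rpow, div_eq_div_iff (by positivity) (by positivity), one_mul,
      ← Real.rpow_natCast, ← Real.rpow_add hn]
    norm_num

lemma sum_BD (w : ℕ → ℝ) (C : ℝ) (hC : 0 ≤ C)
    (hw : ∀ n : ℕ, 1 ≤ n → |w n| ≤ C * (√(n : ℝ) / (n : ℝ) ^ 2)) :
    BD (fun N => ∑ n ∈ Finset.Icc 1 N, w n) := by
  have hn : ∀ n : ℕ, 0 ≤ √(n : ℝ) / (n : ℝ) ^ 2 := fun n => by positivity
  refine ⟨C * ∑' n : ℕ, √(n : ℝ) / (n : ℝ) ^ 2, mul_nonneg hC (tsum_nonneg hn), fun N => ?_⟩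
  calc |∑ n ∈ Finset.Icc 1 N, w n| ≤ ∑ n ∈ Finset.Icc 1 N, |w n| :=
        Finset.abs_sum_le_sum_abs _ _
    _ ≤ ∑ n ∈ Finset.Icc 1 N, C * (√(n : ℝ) / (n : ℝ) ^ 2) :=
        Finset.sum_le_sum fun n hn => hw n (Finset.mem_Icc.1 hn).1
    _ = C * ∑ n ∈ Finset.Icc 1 N, (√(n : ℝ) / (n : ℝ) ^ 2) := by rw [Finset.mul_sum]
    _ ≤ _ := mul_le_mul_of_nonneg_left (summable_32.sum_le_tsum _ fun n _ => hn n) hC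

lemma sum_QQ (r : ℝ) (hr : 0 < r) (hr1 : r < 1) (w : ℕ → ℝ) (h : QQ r w) :
    QQ r (fun N => ∑ n ∈ Finset.Icc 1 N, w n) := by
  obtain ⟨C, hC, hw⟩ := h
  have hs : Summable (fun j : ℕ => ((j : ℝ) + 1) * r ^ j) := by
    have h1 := summable_pow_mul_geometric_of_norm_lt_one (R := ℝ) 1 (r := r)
      (by rw [Real.norm_of_nonneg hr.le]; exact hr1)
    have h2 := summable_geometric_of_lt_one hr.le hr1
    refine (h1.add h2).congr fun j => by ring
  have hn : ∀ j : ℕ, 0 ≤ ((j : ℝ) + 1) * r ^ j := fun j => by positivity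
  refine ⟨C * ∑' j : ℕ, ((j : ℝ) + 1) * r ^ j, mul_nonneg hC (tsum_nonneg hn), fun N hN => ?_⟩
  have hNpos : (0 : ℝ) < √(N : ℝ) := Real.sqrt_pos.2 (by exact_mod_cast hN)
  calc |∑ n ∈ Finset.Icc 1 N, w n| ≤ ∑ n ∈ Finset.Icc 1 N, |w n| :=
        Finset.abs_sum_le_sum_abs _ _
    _ ≤ ∑ n ∈ Finset.Icc 1 N, C * ((1 / r) ^ N / √(N : ℝ)) *
          ((((N - n : ℕ) : ℝ) + 1) * r ^ (N - n)) := by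
        refine Finset.sum_le_sum fun k hk => (hw k (Finset.mem_Icc.1 hk).1).trans ?_
        obtain ⟨hk1, hkN⟩ := Finset.mem_Icc.1 hk
        obtain ⟨j, rfl⟩ := Nat.exists_eq_add_of_le hkN
        rw [Nat.add_sub_cancel_left, mul_assoc]
        refine mul_le_mul_of_nonneg_left ?_ hC
        have hkpos : (0 : ℝ) < √(k : ℝ) := Real.sqrt_pos.2 (by exact_mod_cast hk1)
        have hsq : √((k + j : ℕ) : ℝ) ≤ ((j : ℝ) + 1) * √(k : ℝ) := by
          rw [Real.sqrt_le_left (by positivity), mul_pow, Real.sq_sqrt (by positivity)]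
          push_cast
          have : (1 : ℝ) ≤ k := by exact_mod_cast hk1
          have hj : (0 : ℝ) ≤ j := by positivity
          nlinarith [mul_nonneg hj (sub_nonneg.2 this), mul_nonneg (sq_nonneg (j : ℝ)) (sub_nonneg.2 this)]
        have e : (1 / r) ^ (k + j) * r ^ j = (1 / r) ^ k := by
          rw [pow_add, mul_assoc, ← mul_pow]
          simp [hr.ne']
        have e2 : (1 / r) ^ (k + j) / √((k + j : ℕ) : ℝ) * (((j : ℝ) + 1) * r ^ j) =
            (1 / r) ^ k * (((j : ℝ) + 1) / √((k + j : ℕ) : ℝ)) := by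
          rw [← e]
          ring
        rw [e2, div_eq_mul_inv]
        refine mul_le_mul_of_nonneg_left ?_ (by positivity)
        rw [inv_eq_one_div, div_le_div_iff₀ hkpos hNpos, one_mul]
        exact hsq
    _ = C * ((1 / r) ^ N / √(N : ℝ)) *
          ∑ n ∈ Finset.Icc 1 N, ((((N - n : ℕ) : ℝ) + 1) * r ^ (N - n)) := by
        rw [Finset.mul_sum]
    _ = C * ((1 / r) ^ N / √(N : ℝ)) * ∑ j ∈ Finset.range N, (((j : ℝ) + 1) * r ^ j) := by
        congr 1
        refine Finset.sum_nbij' (fun k => N - k) (fun j => N - j) ?_ ?_ ?_ ?_ ?_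
        · intro k hk
          simp only [Finset.mem_Icc, Finset.mem_range] at hk ⊢
          omega
        · intro k hk
          simp only [Finset.mem_Icc, Finset.mem_range] at hk ⊢
          omega
        · intro k hk
          simp only [Finset.mem_Icc] at hk
          omega
        · intro k hk
          simp only [Finset.mem_range] at hk
          omega
        · intro k _
          rfl
    _ ≤ C * ((1 / r) ^ N / √(N : ℝ)) * ∑' j : ℕ, ((j : ℝ) + 1) * r ^ j :=
        mul_le_mul_of_nonneg_left (hs.sum_le_tsum _ fun n _ => hn n) (by positivity)
    _ = _ := by ring

lemma SS_QQ (r : ℝ) (hr : 0 < r) (hr1 : r < 1) (f : ℕ → ℝ) (h : QQ r f) : QQ r (SS f) := by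
  refine sum_QQ r hr hr1 _ ?_
  obtain ⟨C, hC, h⟩ := h
  refine ⟨C, hC, fun n hn => le_trans ?_ (h n hn)⟩
  rw [abs_div, Nat.abs_cast]
  exact div_le_self (abs_nonneg _) (by exact_mod_cast hn)

lemma rep_GG {f : ℕ → ℝ} (h : GG f) (u : ℕ) : GG (opT (List.replicate u (1, (1 : ℝ))) f) := by
  induction u with
  | zero => exact h
  | succ u ih =>
    rw [List.replicate_succ, opT_one]
    exact SS_GG ih

lemma rep_QQ (r : ℝ) (hr : 0 < r) (hr1 : r < 1) {f : ℕ → ℝ} (h : QQ r f) (u : ℕ) :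
    QQ r (opT (List.replicate u (1, (1 : ℝ))) f) := by
  induction u with
  | zero => exact h
  | succ u ih =>
    rw [List.replicate_succ, opT_one]
    exact SS_QQ r hr hr1 _ ih

lemma Lblock_BD {f : ℕ → ℝ} (h : GG f) (m u : ℕ) :
    BD (opT ((m + 2, (1 : ℝ)) :: List.replicate u (1, (1 : ℝ))) f) := by
  obtain ⟨C, hC, h⟩ := rep_GG h u
  refine sum_BD _ C hC fun n hn => ?_
  have h1 : (1 : ℝ) ≤ n := by exact_mod_cast hn
  rw [abs_mul, one_pow, abs_of_nonneg (by positivity)]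
  calc 1 / (n : ℝ) ^ (m + 2) * |opT (List.replicate u (1, (1 : ℝ))) f n|
      ≤ 1 / (n : ℝ) ^ 2 * (C * √(n : ℝ)) := by
        have := h n hn
        have h2 : (n : ℝ) ^ 2 ≤ (n : ℝ) ^ (m + 2) := pow_le_pow_right₀ h1 (by omega)
        gcongr
    _ = _ := by ring

lemma Rblock_BD (r : ℝ) (hr : 0 < r) (hr1 : r < 1) {f : ℕ → ℝ} (h : GG f) (m u : ℕ) :
    BD (opT ((1, r) :: (List.replicate m (1, (1 : ℝ)) ++
      (1, 1 / r) :: List.replicate u (1, (1 : ℝ)))) f) := by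
  rw [opT_x, opT_append, opT_x]
  have h1 : QQ r (SS (fun n => (1 / r) ^ n * opT (List.replicate u (1, (1 : ℝ))) f n)) := by
    refine sum_QQ r hr hr1 _ ?_
    obtain ⟨C, hC, h⟩ := rep_GG h u
    refine ⟨C, hC, fun n hn => ?_⟩
    rw [abs_div, abs_mul, Nat.abs_cast, abs_of_nonneg (by positivity)]
    calc (1 / r) ^ n * |opT (List.replicate u (1, (1 : ℝ))) f n| / (n : ℝ)
        ≤ (1 / r) ^ n * (C * √(n : ℝ)) / (n : ℝ) := by
          have := h n hn
          gcongr
      _ = C * ((1 / r) ^ n * (√(n : ℝ) / (n : ℝ))) := by ring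
      _ = _ := by rw [sqrt_div_self']; ring
  obtain ⟨C, hC, h2⟩ := rep_QQ r hr hr1 h1 m
  refine sum_BD _ C hC fun n hn => ?_
  rw [abs_div, abs_mul, Nat.abs_cast, abs_of_nonneg (by positivity : 0 ≤ r ^ n)]
  refine (div_le_div_of_nonneg_right (mul_le_mul_of_nonneg_left (h2 n hn) (by positivity))
    (by positivity)).trans (le_of_eq ?_)
  rw [pow_two, ← div_div, sqrt_div_self']
  have : r ^ n * (1 / r) ^ n = 1 := by
    rw [← mul_pow]
    simp [hr.ne']
  calc r ^ n * (C * ((1 / r) ^ n / √(n : ℝ))) / (n : ℝ)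
      = (r ^ n * (1 / r) ^ n) * (C * (1 / √(n : ℝ) / (n : ℝ))) := by ring
    _ = _ := by rw [this, one_mul]

lemma Lb_GG {f : ℕ → ℝ} (h : GG f) (l : List (ℕ × ℕ)) : GG (opT (Lb l) f) := by
  induction l with
  | nil => exact h
  | cons c l ih =>
    have : Lb (c :: l) = ((c.1 + 2, (1 : ℝ)) :: List.replicate c.2 (1, (1 : ℝ))) ++ Lb l := by
      simp [Lb]
    rw [this, opT_append]
    exact (Lblock_BD ih _ _).gg

lemma Lb_BD {f : ℕ → ℝ} (h : GG f) (l : List (ℕ × ℕ)) (hl : l ≠ []) : BD (opT (Lb l) f) := by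
  cases l with
  | nil => exact absurd rfl hl
  | cons c l =>
    have : Lb (c :: l) = ((c.1 + 2, (1 : ℝ)) :: List.replicate c.2 (1, (1 : ℝ))) ++ Lb l := by
      simp [Lb]
    rw [this, opT_append]
    exact Lblock_BD (Lb_GG h l) _ _

lemma Rb_GG (r : ℝ) (hr : 0 < r) (hr1 : r < 1) {f : ℕ → ℝ} (h : GG f) (l : List (ℕ × ℕ)) :
    GG (opT (Rb r l) f) := by
  induction l with
  | nil => exact h
  | cons c l ih =>
    have : Rb r (c :: l) = ((1, r) :: (List.replicate c.1 (1, (1 : ℝ)) ++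
      (1, 1 / r) :: List.replicate c.2 (1, (1 : ℝ)))) ++ Rb r l := by
      simp [Rb]
    rw [this, opT_append]
    exact (Rblock_BD r hr hr1 ih _ _).gg

lemma Rb_BD (r : ℝ) (hr : 0 < r) (hr1 : r < 1) {f : ℕ → ℝ} (h : GG f) (l : List (ℕ × ℕ))
    (hl : l ≠ []) : BD (opT (Rb r l) f) := by
  cases l with
  | nil => exact absurd rfl hl
  | cons c l =>
    have : Rb r (c :: l) = ((1, r) :: (List.replicate c.1 (1, (1 : ℝ)) ++
      (1, 1 / r) :: List.replicate c.2 (1, (1 : ℝ)))) ++ Rb r l := by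
      simp [Rb]
    rw [this, opT_append]
    exact Rblock_BD r hr hr1 (Rb_GG r hr hr1 h l) _ _

lemma last_GG (y : ℝ) (hy : |y| ≤ 1) : GG (opT [(1, y)] (fun _ => 1)) := by
  rw [opT_x]
  apply SS_GG
  apply BD.gg
  refine ⟨1, zero_le_one, fun n => ?_⟩
  simp only [opT, mul_one, abs_pow]
  exact pow_le_one₀ (abs_nonneg _) hy

lemma L_tendsto (a : ℝ) (ha : |a| ≤ 1) (l : List (ℕ × ℕ)) (hl : l ≠ []) :
    Tendsto (opT (Lb l ++ [(1, a)]) (fun _ => 1)) atTop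
      (𝓝 (LiStar ((Lb l ++ [(1, a)]).map Prod.fst) ((Lb l ++ [(1, a)]).map Prod.snd))) := by
  obtain ⟨C, _, h⟩ := Lb_BD (last_GG |a| (by rwa [abs_abs])) l hl
  refine LiStar_tendsto _ C fun N => ?_
  have e : (Lb l ++ [(1, a)]).map (fun c : ℕ × ℝ => (c.1, |c.2|)) = Lb l ++ [(1, |a|)] := by
    simp [Lb, List.map_flatMap]
  rw [e, opT_append]
  exact (le_abs_self _).trans (h N)

lemma R_tendsto (q y : ℝ) (hq : q ≠ 0) (hq1 : |q| < 1) (hy : |y| ≤ 1) (l : List (ℕ × ℕ))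
    (hl : l ≠ []) :
    Tendsto (opT (Rb q l ++ [(1, y)]) (fun _ => 1)) atTop
      (𝓝 (LiStar ((Rb q l ++ [(1, y)]).map Prod.fst) ((Rb q l ++ [(1, y)]).map Prod.snd))) := by
  obtain ⟨C, _, h⟩ := Rb_BD |q| (abs_pos.2 hq) hq1 (last_GG |y| (by rwa [abs_abs])) l hl
  refine LiStar_tendsto _ C fun N => ?_
  have e : (Rb q l ++ [(1, y)]).map (fun c : ℕ × ℝ => (c.1, |c.2|)) = Rb |q| l ++ [(1, |y|)] := by
    simp [Rb, List.map_flatMap]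
  rw [e, opT_append]
  exact (le_abs_self _).trans (h N)

lemma finite_id (a q p : ℝ) (hq : q ≠ 0) (hpq : p + q = 1) (l : List (ℕ × ℕ)) (N : ℕ) :
    opT (Rb q l ++ [(1, q + a * p)]) (fun _ => 1) N - opT (Rb q l ++ [(1, q)]) (fun _ => 1) N =
      BB q p (opT (Lb l ++ [(1, a)]) (fun _ => 1)) N := by
  simp only [opT_append]
  rw [← opT_sub, ← blocks_B _ (by simp [opT]) q p hq hpq]
  congr 1
  let e : ℕ → ℝ := fun k => if k = 0 then 0 else a ^ k
  have h1 : opT [(1, a)] (fun _ => 1) = SS e := by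
    rw [opT_x]
    funext n
    refine Finset.sum_congr rfl fun k hk => ?_
    have : k ≠ 0 := by
      have := (Finset.mem_Icc.1 hk).1
      omega
    simp [opT, e, this]
  have h2 : BB q p e = fun n => (q + a * p) ^ n - q ^ n := by
    funext n
    have := add_pow (a * p) q n
    rw [add_comm q, this]
    unfold BB
    rw [Finset.sum_range_succ', Finset.sum_range_succ' _ n]
    simp only [e]
    simp only [Nat.add_eq_zero_iff, one_ne_zero, and_false, if_false, if_true]
    simp only [pow_zero, Nat.sub_zero, Nat.choose_zero_right, Nat.cast_one, mul_zero, one_mul,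
      mul_one, add_zero, add_sub_cancel_right]
    refine Finset.sum_congr rfl fun k _ => ?_
    rw [mul_pow]
    ring
  rw [h1, ← BB_SS e (by simp [e]) q p hpq, h2]
  funext n
  rw [opT_x, opT_x]
  simp only [SS, opT, ← Finset.sum_sub_distrib, mul_one, sub_div]

lemma main_id (a p : ℝ) (hp : p ≠ 1) (ha : |a| ≤ min 1 (2 / p - 1)) (l : List (ℕ × ℕ))
    (hl : l ≠ []) :
    LiStar ((Lb l ++ [(1, a)]).map Prod.fst) ((Lb l ++ [(1, a)]).map Prod.snd) =
    LiStar ((Rb (1 - p) l ++ [(1, 1 - p + a * p)]).map Prod.fst)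
        ((Rb (1 - p) l ++ [(1, 1 - p + a * p)]).map Prod.snd) -
      LiStar ((Rb (1 - p) l ++ [(1, 1 - p)]).map Prod.fst)
        ((Rb (1 - p) l ++ [(1, 1 - p)]).map Prod.snd) := by
  obtain ⟨ha1, ha2⟩ := le_min_iff.1 ha
  have hLt := L_tendsto a ha1 l hl
  have h0 := (abs_nonneg a).trans ha2
  have hp0 : 0 < p := by
    by_contra h
    have : 2 / p ≤ 0 := div_nonpos_of_nonneg_of_nonpos (by norm_num) (not_lt.1 h)
    linarith
  have hap : |a| * p ≤ 2 - p := by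
    have := mul_le_mul_of_nonneg_right ha2 hp0.le
    rwa [sub_mul, div_mul_cancel₀ _ hp0.ne', one_mul] at this
  have hp2 : p ≤ 2 := by nlinarith [abs_nonneg a]
  rcases hp2.eq_or_lt with rfl | hp2
  · have ha0 : a = 0 := by
      have : |a| ≤ 0 := by linarith
      exact abs_nonpos_iff.1 this
    subst ha0
    have hz : opT (Lb l ++ [(1, (0 : ℝ))]) (fun _ => 1) = fun _ => 0 := by
      funext N
      rw [opT_append]
      have : opT [(1, (0 : ℝ))] (fun _ => 1) = fun _ => 0 := by
        funext n
        simp only [opT]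
        refine Finset.sum_eq_zero fun k hk => ?_
        have : k ≠ 0 := by
          have := (Finset.mem_Icc.1 hk).1
          omega
        simp [this]
      rw [this, opT_zero]
    rw [hz] at hLt
    rw [tendsto_nhds_unique hLt tendsto_const_nhds]
    simp
  · have hq : 1 - p ≠ 0 := fun h => hp (by linarith)
    have hq1 : |1 - p| < 1 := abs_lt.2 ⟨by linarith, by linarith⟩
    have hy : |1 - p + a * p| ≤ 1 := by
      have h1 := neg_abs_le a
      have h2 := le_abs_self a
      exact abs_le.2 ⟨by nlinarith, by nlinarith⟩
    have hR := (R_tendsto (1 - p) _ hq hq1 hy l hl).sub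
      (R_tendsto (1 - p) (1 - p) hq hq1 hq1.le l hl)
    have hpq : p + (1 - p) = 1 := by ring
    have hfun : BB (1 - p) p (opT (Lb l ++ [(1, a)]) (fun _ => 1)) = fun N =>
        opT (Rb (1 - p) l ++ [(1, 1 - p + a * p)]) (fun _ => 1) N -
          opT (Rb (1 - p) l ++ [(1, 1 - p)]) (fun _ => 1) N := by
      funext N
      exact (finite_id a (1 - p) p hq hpq l N).symm
    rw [← hfun] at hR
    rcases lt_or_gt_of_ne hq with hneg | hpos
    · have h1 := BB_tendsto _ _ (-(1 - p) / p) (1 / p) (div_pos (by linarith) hp0) (by positivity)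
        (by field_simp; ring) hR
      have h2 : BB (-(1 - p) / p) (1 / p) (BB (1 - p) p (opT (Lb l ++ [(1, a)]) (fun _ => 1))) =
          opT (Lb l ++ [(1, a)]) (fun _ => 1) := by
        funext n
        exact BB_inv _ _ _ hp0.ne' n
      rw [h2] at h1
      exact tendsto_nhds_unique hLt h1
    · exact tendsto_nhds_unique (BB_tendsto _ _ (1 - p) p hpos hp0 hpq hLt) hR

/-- block data -/
def blk (d : ℕ) (m u : Fin (d + 1) → ℕ) : List (ℕ × ℕ) :=
  List.ofFn fun i : Fin (d + 1) => (m i, u i - if i = Fin.last d then 1 else 0)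

lemma s_eq (d : ℕ) (m u : Fin (d + 1) → ℕ) (hu : 1 ≤ u (Fin.last d)) (a : ℝ) :
    (Lb (blk d m u) ++ [(1, a)]).map Prod.fst = sTup2 d m u := by
  have hlt : ∀ i : Fin d, i.castSucc ≠ Fin.last d := fun i => (Fin.castSucc_lt_last i).ne
  obtain ⟨v, hv⟩ := Nat.exists_eq_add_of_le hu
  have hr : List.replicate (u (Fin.last d)) 1 = List.replicate v 1 ++ [1] := by
    rw [hv, add_comm, List.replicate_succ']
  unfold Lb blk sTup2
  rw [List.ofFn_succ', List.ofFn_succ']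
  simp only [List.concat_eq_append, hlt, if_false, if_true, Nat.sub_zero, List.flatMap_append,
    List.flatten_append, List.flatMap_def, List.map_append, List.map_flatten, List.map_ofFn, hr]
  simp [Function.comp_def, hv]

lemma Lb_snd (l : List (ℕ × ℕ)) : (Lb l).map Prod.snd = List.replicate (Lb l).length (1 : ℝ) := by
  refine List.eq_replicate_iff.2 ⟨by simp, ?_⟩
  intro b hb
  simp only [Lb, List.mem_map, List.mem_flatMap] at hb
  obtain ⟨c, ⟨e, _, he⟩, rfl⟩ := hb
  rcases List.mem_cons.1 he with h | h
  · rw [h]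
  · rw [List.eq_of_mem_replicate h]

lemma Rb_snd (d : ℕ) (m u : Fin (d + 1) → ℕ) (p : ℝ) :
    (Rb (1 - p) (blk d m u)).map Prod.snd = xPre2 d m u p := by
  unfold Rb blk xPre2
  simp [List.flatMap_def, List.map_flatten, List.map_ofFn, Function.comp_def]

lemma Rb_fst (q : ℝ) (l : List (ℕ × ℕ)) (a y : ℝ) :
    (Rb q l ++ [(1, y)]).map Prod.fst =
      List.replicate ((Lb l ++ [(1, a)]).map Prod.fst).sum 1 := by
  refine List.eq_replicate_iff.2 ⟨?_, ?_⟩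
  · induction l with
    | nil => simp [Rb, Lb]
    | cons c l ih =>
      simp [Rb, Lb] at ih ⊢
      omega
  · intro b hb
    simp only [Rb, List.map_append, List.mem_append, List.mem_map, List.mem_flatMap] at hb
    rcases hb with ⟨c, ⟨e, _, he⟩, rfl⟩ | ⟨c, hc, rfl⟩
    · simp only [List.mem_cons, List.mem_append, List.mem_replicate] at he
      rcases he with h | ⟨_, h⟩ | h | ⟨_, h⟩ <;> rw [h]
    · rw [List.mem_singleton.1 hc]

/-- Second theorem on polylogarithms (Theorem 3.3). -/
theorem stmt_17 (d : ℕ) (m u : Fin (d + 1) → ℕ) (hu : 1 ≤ u (Fin.last d))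
    (a p : ℝ) (hp : p ≠ 1) (ha : |a| ≤ min 1 (2 / p - 1)) :
    LiStar (sTup2 d m u) (List.replicate ((sTup2 d m u).length - 1) (1 : ℝ) ++ [a]) =
      LiStar (List.replicate (sTup2 d m u).sum 1) (xPre2 d m u p ++ [1 - p + a * p]) -
        LiStar (List.replicate (sTup2 d m u).sum 1) (xPre2 d m u p ++ [1 - p]) := by
  have hl : blk d m u ≠ [] := by simp [blk, List.ofFn_succ]
  have h := main_id a p hp ha (blk d m u) hl
  have hlen : (sTup2 d m u).length - 1 = (Lb (blk d m u)).length := by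
    rw [← s_eq d m u hu a]
    simp
  rw [Rb_fst _ _ a, Rb_fst _ _ a, s_eq d m u hu a] at h
  simp only [List.map_append, Lb_snd, Rb_snd, List.map_cons, List.map_nil] at h
  rw [hlen]
  exact h
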